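/- Let R be a nonzero prime left artinian ring. Then there exist a division ring D and a positive integer n such that R is isomorphic as a ring to the ring M_n(D) of n×n matrices over D. -/

import Mathlib

universe u

/-!
For left ideals of a prime ring, `I * J = 0` forces `I = 0` or `J = 0`. Hence a nilpotent Jacobson
radical vanishes, so a prime ring that is artinian, or merely semiprimary, is semisimple. A
two-sided ideal `I` then has a complementary left ideal `J`, and `I * J ≤ I ⊓ J = 0`, so one of
`I`, `J` is zero: the ring is simple, and the Wedderburn–Artin theorem for simple rings applies.
-/

/-- Prime rings, in the elementwise form: `aRb = 0` only if `a = 0` or `b = 0`. -/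
def IsPrimeRing (R : Type*) [Mul R] [Zero R] : Prop :=
  ∀ a b : R, (∀ x : R, a * x * b = 0) → a = 0 ∨ b = 0

namespace IsPrimeRing

section Semiring

variable {R : Type*} [Semiring R]

theorem eq_bot_or_eq_bot_of_mul_eq_bot (hR : IsPrimeRing R) {I J : Ideal R} (hIJ : I * J = ⊥) :
    I = ⊥ ∨ J = ⊥ := by
  by_contra! hne
  obtain ⟨a, haI, ha⟩ := Submodule.exists_mem_ne_zero_of_ne_bot hne.1
  obtain ⟨b, hbJ, hb⟩ := Submodule.exists_mem_ne_zero_of_ne_bot hne.2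
  have hab (x : R) : a * x * b = 0 := by
    rw [mul_assoc, ← Ideal.mem_bot, ← hIJ]
    exact Ideal.mul_mem_mul haI (J.mul_mem_left x hbJ)
  exact (hR a b hab).elim ha hb

theorem eq_bot_of_isNilpotent (hR : IsPrimeRing R) {I : Ideal R} (hI : IsNilpotent I) :
    I = ⊥ := by
  obtain ⟨n, hn⟩ := hI
  induction n with
  | zero =>
    have htop : (⊤ : Ideal R) = ⊥ := by rwa [Submodule.pow_zero, Ideal.one_eq_top] at hn
    exact eq_bot_mono le_top htop
  | succ n ih =>
    rw [Submodule.pow_succ] at hn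
    exact (hR.eq_bot_or_eq_bot_of_mul_eq_bot hn).elim ih id

theorem eq_bot_or_eq_bot_of_disjoint (hR : IsPrimeRing R) {I J : Ideal R} [I.IsTwoSided]
    (hIJ : Disjoint I J) : I = ⊥ ∨ J = ⊥ :=
  hR.eq_bot_or_eq_bot_of_mul_eq_bot (eq_bot_mono Ideal.mul_le_inf hIJ.eq_bot)

end Semiring

variable {R : Type*} [Ring R]

theorem isSemisimpleRing [IsSemiprimaryRing R] (hR : IsPrimeRing R) : IsSemisimpleRing R :=
  have jacobson_eq_bot : Ring.jacobson R = ⊥ :=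
    hR.eq_bot_of_isNilpotent IsSemiprimaryRing.isNilpotent
  ((Ideal.quotEquivOfEq jacobson_eq_bot).trans (RingEquiv.quotientBot R)).isSemisimpleRing

theorem isSimpleRing [Nontrivial R] [IsSemisimpleRing R] (hR : IsPrimeRing R) :
    IsSimpleRing R := by
  refine isSimpleRing_iff_isTwoSided_imp.mpr ⟨inferInstance, fun I _ ↦ ?_⟩
  obtain ⟨J, hIJ⟩ := exists_isCompl I
  refine (hR.eq_bot_or_eq_bot_of_disjoint hIJ.disjoint).imp_right ?_
  rintro rfl
  exact eq_top_of_isCompl_bot hIJ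

end IsPrimeRing

theorem wedderburn_artin_prime_general (R : Type u) [Ring R] [Nontrivial R] [IsSemiprimaryRing R]
    (hR : IsPrimeRing R) :
    ∃ (n : ℕ) (D : Type u) (_ : DivisionRing D),
      0 < n ∧ Nonempty (R ≃+* Matrix (Fin n) (Fin n) D) := by
  have : IsSemisimpleRing R := hR.isSemisimpleRing
  have : IsSimpleRing R := hR.isSimpleRing
  obtain ⟨n, hn, D, hD, e⟩ := IsSimpleRing.exists_ringEquiv_matrix_divisionRing R
  exact ⟨n, D, hD, hn.pos, e⟩

/-- If `R` is a nonzero prime left artinian ring, then there exist a division ring `D` and a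
positive integer `n` such that `R ≅ Mₙ(D)`.  Here primeness is expressed elementwise:
`aRb = {0}` implies `a = 0` or `b = 0`. -/
theorem wedderburn_artin_prime (R : Type u) [Ring R] [Nontrivial R]
    (hprime : ∀ a b : R, (∀ x : R, a * x * b = 0) → a = 0 ∨ b = 0)
    (hart : IsArtinianRing R) :
    ∃ (n : ℕ) (D : Type u) (_ : DivisionRing D),
      0 < n ∧ Nonempty (R ≃+* Matrix (Fin n) (Fin n) D) :=
  wedderburn_artin_prime_general R hprime
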